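/- For every nonnegative integer n, ped(225n + 223) ≡ 0 (mod 24). -/

import Mathlib

/-- `ped n` is the number of partitions of `n` in which the even parts are
distinct (and the odd parts are unrestricted). -/
def ped (n : ℕ) : ℕ :=
  Fintype.card {p : n.Partition // ∀ x ∈ p.parts, Even x → p.parts.count x ≤ 1}

/-!
Let `G = ∑ (-1) ^ n * ped n * q ^ n`, and let `φ = f(q, q)`, `ψ = f(q, q ^ 3)`, `t = f(1, q ^ 2)` be
theta functions, where `f(q ^ a, q ^ b) = ∑ q ^ (a j (j - 1) / 2 + b j (j + 1) / 2)` over `j : ℤ`.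
The product formula for `G` and the Jacobi triple product give `G φ = ψ` and `2 G ψ = t`.

Modulo `8`: as `φ = 1 + 2 S` with `S = q + q ^ 4 + q ^ 9 + ⋯`, one has
`G = ψ - 2 ψ S + 4 ψ S ^ 2 - 8 G S ^ 3`, where `S ^ 2` may be replaced by `S(q ^ 2)`. The exponents
`n` of `ψ` and `ψ S` satisfy `8 n + 1 = x ^ 2 + 8 y ^ 2`, those of `ψ S(q ^ 2)` satisfy
`8 n + 1 = x ^ 2 + 16 y ^ 2`. If `n = 225 k + 223`, then `8 n + 1` is `10` modulo `25` and `3`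
modulo `9`, which excludes both.

Modulo `3`: sorting the pairs `(u, v)` by the parity of `v` shows that
`φ φ(q ^ 3) + q t t(q ^ 3) = ∑ q ^ (u ^ 2 + u v + v ^ 2)`, which is `1` modulo `3` because of the
symmetry `(u, v) ↦ (v, -u - v)` of order three. So `φ ^ 4 + q t ^ 4 = 1`, and `t = 2 G ^ 2 φ` turns
this into `G = ψ φ ^ 3 + q φ ^ 4 G ^ 9`. Here `G ^ 9 = G(q ^ 9)`, and no exponent of `ψ φ(q ^ 3)` or
`q φ φ(q ^ 3)` is `7` modulo `9`.
-/

open Filter Finset PowerSeries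

section QBinomial

variable {R : Type*}

section CommSemiring

variable [CommSemiring R] (q : R)

/-- The Gaussian binomial coefficient `[n choose k]_q`, defined by a `q`-Pascal rule. -/
def qBinom (q : R) : ℕ → ℕ → R
  | _, 0 => 1
  | 0, _ + 1 => 0
  | n + 1, k + 1 => qBinom q n k + q ^ (k + 1) * qBinom q n (k + 1)

@[simp] lemma qBinom_zero_right (n : ℕ) : qBinom q n 0 = 1 := by
  cases n <;> rfl

lemma qBinom_succ_succ (n k : ℕ) :
    qBinom q (n + 1) (k + 1) = qBinom q n k + q ^ (k + 1) * qBinom q n (k + 1) :=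
  rfl

lemma qBinom_eq_zero_of_lt {n k : ℕ} (h : n < k) : qBinom q n k = 0 := by
  induction n, k using qBinom.induct with
  | case1 n => omega
  | case2 k => rfl
  | case3 n k ih₁ ih₂ => rw [qBinom_succ_succ, ih₁ (by omega), ih₂ (by omega), mul_zero, add_zero]

@[simp] lemma qBinom_self (n : ℕ) : qBinom q n n = 1 := by
  induction n with
  | zero => rfl
  | succ n ih =>
    rw [qBinom_succ_succ, ih, qBinom_eq_zero_of_lt q n.lt_succ_self, mul_zero, add_zero]

lemma qBinom_succ_succ' {n k : ℕ} (h : k ≤ n) :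
    qBinom q (n + 1) (k + 1) = qBinom q n (k + 1) + q ^ (n - k) * qBinom q n k := by
  induction n generalizing k with
  | zero =>
    obtain rfl : k = 0 := by omega
    simp [qBinom_eq_zero_of_lt]
  | succ n ih =>
    rcases k with _ | k
    · conv_lhs => rw [qBinom_succ_succ, ih n.zero_le]
      conv_rhs => rw [qBinom_succ_succ]
      simp only [qBinom_zero_right, Nat.sub_zero]
      ring
    rcases (Nat.le_of_succ_le_succ h).eq_or_lt with rfl | hlt
    · simp [qBinom_eq_zero_of_lt q (Nat.lt_succ_self _)]
    conv_lhs => rw [qBinom_succ_succ, ih hlt, ih hlt.le]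
    conv_rhs => rw [qBinom_succ_succ, qBinom_succ_succ]
    obtain ⟨d, rfl⟩ := Nat.exists_eq_add_of_lt hlt
    simp only [show k + d + 1 - k = d + 1 by omega, show k + d + 1 - k.succ = d by omega,
      show k + d + 1 + 1 - (k + 1) = d + 1 by omega]
    ring

end CommSemiring

section CommRing

variable [CommRing R] (q : R)

/-- The finite `q`-Pochhammer symbol `(q; q)_n`. -/
def qPochhammer (n : ℕ) : R := ∏ i ∈ range n, (1 - q ^ (i + 1))

lemma qPochhammer_succ (n : ℕ) :
    qPochhammer q (n + 1) = qPochhammer q n * (1 - q ^ (n + 1)) :=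
  prod_range_succ ..

lemma qBinom_mul_qPochhammer (k l : ℕ) :
    qBinom q (k + l) k * qPochhammer q k = ∏ i ∈ range k, (1 - q ^ (l + i + 1)) := by
  induction k generalizing l with
  | zero => simp [qPochhammer]
  | succ k ihk =>
    induction l with
    | zero => simp [qPochhammer]
    | succ l ihl =>
      have hfirst : ∏ i ∈ range (k + 1), (1 - q ^ (l + i + 1)) =
          (∏ i ∈ range k, (1 - q ^ (l + 1 + i + 1))) * (1 - q ^ (l + 1)) := by
        rw [prod_range_succ']
        simp only [add_zero, add_comm, add_left_comm]
      have ihk := ihk (l + 1)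
      rw [show k + (l + 1) = k + 1 + l by ring] at ihk
      rw [hfirst] at ihl
      rw [show k + 1 + (l + 1) = k + 1 + l + 1 by ring, qBinom_succ_succ, prod_range_succ]
      rw [qPochhammer_succ] at ihl ⊢
      linear_combination (1 - q ^ (k + 1)) * ihk + q ^ (k + 1) * ihl

lemma pow_dvd_prod_one_sub_pow_sub_one {ι : Type*} {s : Finset ι} {e : ι → ℕ} {n : ℕ}
    (he : ∀ i ∈ s, n ≤ e i) : q ^ n ∣ ∏ i ∈ s, (1 - q ^ e i) - 1 := by
  refine prod_induction _ (fun x => q ^ n ∣ x - 1) (fun x y hx hy => ?_) (by simp) fun i hi => ?_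
  · simpa using dvd_mul_sub_mul hx hy
  · rw [sub_sub_cancel_left, dvd_neg]
    exact pow_dvd_pow q (he i hi)

lemma pow_dvd_qBinom_mul_qPochhammer_sub_one {d k l m : ℕ} (hk : d ≤ k) (hl : d ≤ l)
    (hm : k ≤ m) : q ^ (d + 1) ∣ qBinom q (k + l) k * qPochhammer q m - 1 := by
  have hsplit : qPochhammer q m = qPochhammer q k * ∏ i ∈ Ico k m, (1 - q ^ (i + 1)) :=
    (prod_range_mul_prod_Ico _ hm).symm
  have hleft : q ^ (d + 1) ∣ ∏ i ∈ range k, (1 - q ^ (l + i + 1)) - 1 :=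
    pow_dvd_prod_one_sub_pow_sub_one q fun i _ => by omega
  have hright : q ^ (d + 1) ∣ ∏ i ∈ Ico k m, (1 - q ^ (i + 1)) - 1 :=
    pow_dvd_prod_one_sub_pow_sub_one q fun i hi => by have := (mem_Ico.mp hi).1; omega
  rw [hsplit, ← mul_assoc, qBinom_mul_qPochhammer]
  simpa using dvd_mul_sub_mul hleft hright

end CommRing

/-- The triangular number `j * (j - 1) / 2`. -/
def triangle (j : ℤ) : ℕ := (j * (j - 1) / 2).toNat

lemma two_mul_triangle (j : ℤ) : 2 * (triangle j : ℤ) = j * (j - 1) := by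
  have hnonneg : 0 ≤ j * (j - 1) := by
    rcases le_or_gt j 0 with h | h <;> nlinarith
  rw [triangle, Int.toNat_of_nonneg (Int.ediv_nonneg hnonneg zero_le_two),
    Int.mul_ediv_cancel' (even_iff_two_dvd.mp (Int.even_mul_pred_self j))]

lemma triangle_add_one (j : ℤ) : (triangle (j + 1) : ℤ) = triangle j + j := by
  linarith [two_mul_triangle j, two_mul_triangle (j + 1)]

section JacobiTripleProduct

variable [CommSemiring R] (A B : R)

lemma prod_one_add_mul_pow_eq_sum_qBinom (m : ℕ) :
    ∏ i ∈ range m, (1 + A * (A * B) ^ i) =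
      ∑ k ∈ range (m + 1),
        A ^ triangle (k - m) * B ^ triangle (m - k) * qBinom (A * B) m k := by
  induction m with
  | zero => simp [triangle]
  | succ m ih =>
    have hshift (k : ℕ) :
        A ^ triangle (k - (m + 1)) * B ^ triangle (m + 1 - k) * (A * B) ^ k =
          A ^ triangle (k - m) * B ^ triangle (m - k) * (A * (A * B) ^ m) := by
      have hA : triangle (k - (m + 1)) + k = triangle (k - m) + 1 + m := by
        zify; grind [triangle_add_one (k - (m + 1))]
      have hB : triangle (m + 1 - k) + k = triangle (m - k) + m := by
        zify; grind [triangle_add_one (m - k)]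
      calc _ = A ^ (triangle (k - (m + 1)) + k) * B ^ (triangle (m + 1 - k) + k) := by ring
        _ = _ := by rw [hA, hB]; ring
    have htail : ∑ k ∈ range (m + 1 + 1),
        A ^ triangle (k - (m + 1)) * B ^ triangle (m + 1 - k) * (A * B) ^ k * qBinom (A * B) m k =
        (∑ k ∈ range (m + 1), A ^ triangle (k - m) * B ^ triangle (m - k) * qBinom (A * B) m k) *
          (A * (A * B) ^ m) := by
      rw [sum_range_succ, qBinom_eq_zero_of_lt _ m.lt_succ_self, mul_zero, add_zero, sum_mul]
      exact sum_congr rfl fun k _ => by rw [hshift]; ring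
    rw [prod_range_succ, ih, mul_add, mul_one, ← htail, sum_range_succ' _ (m + 1),
      sum_range_succ' _ (m + 1)]
    simp only [qBinom_succ_succ, mul_add, sum_add_distrib]
    simp [add_assoc, mul_assoc]

/-- A finite form of the Jacobi triple product. -/
lemma prod_mul_prod_eq_sum_qBinom (m n : ℕ) :
    (∏ i ∈ range m, (1 + A * (A * B) ^ i)) * ∏ i ∈ range n, (1 + B * (A * B) ^ i) =
      ∑ k ∈ range (m + n + 1),
        A ^ triangle (k - m) * B ^ triangle (m - k) * qBinom (A * B) (m + n) k := by
  induction n with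
  | zero => simpa using prod_one_add_mul_pow_eq_sum_qBinom A B m
  | succ n ih =>
    let c (k : ℕ) : R := A ^ triangle (k - m) * B ^ triangle (m - k)
    have hshift {k : ℕ} (hk : k ≤ m + n) :
        c (k + 1) * (A * B) ^ (m + n - k) = c k * (B * (A * B) ^ n) := by
      have hA : triangle ((k + 1 : ℕ) - m) + (m + n - k) = triangle (k - m) + n := by
        zify [hk]; grind [triangle_add_one (k - m)]
      have hB : triangle (m - (k + 1 : ℕ)) + (m + n - k) = triangle (m - k) + 1 + n := by
        zify [hk]; grind [triangle_add_one (m - (k + 1))]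
      calc c (k + 1) * (A * B) ^ (m + n - k) = A ^ (triangle ((k + 1 : ℕ) - m) + (m + n - k)) *
            B ^ (triangle (m - (k + 1 : ℕ)) + (m + n - k)) := by ring
        _ = _ := by rw [hA, hB]; ring
    have hpascal : ∀ k ∈ range (m + n + 1), c (k + 1) * qBinom (A * B) (m + n + 1) (k + 1) =
        c (k + 1) * qBinom (A * B) (m + n) (k + 1) +
          c k * qBinom (A * B) (m + n) k * (B * (A * B) ^ n) := by
      intro k hk
      have hk : k ≤ m + n := Nat.lt_succ_iff.mp (mem_range.mp hk)
      rw [qBinom_succ_succ' _ hk, mul_add, ← mul_assoc, hshift hk]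
      ring
    have hlast : ∑ k ∈ range (m + n + 1 + 1), c k * qBinom (A * B) (m + n) k =
        ∑ k ∈ range (m + n + 1), c k * qBinom (A * B) (m + n) k := by
      rw [sum_range_succ, qBinom_eq_zero_of_lt _ (m + n).lt_succ_self, mul_zero, add_zero]
    calc
      _ = ∑ k ∈ range (m + n + 1), c k * qBinom (A * B) (m + n) k +
          (∑ k ∈ range (m + n + 1), c k * qBinom (A * B) (m + n) k) * (B * (A * B) ^ n) := by
        rw [prod_range_succ, ← mul_assoc, ih, mul_add, mul_one]
      _ = ∑ k ∈ range (m + n + 1), c (k + 1) * qBinom (A * B) (m + n + 1) (k + 1) + c 0 := by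
        rw [sum_congr rfl hpascal, sum_add_distrib, sum_mul, ← hlast, sum_range_succ',
          qBinom_zero_right, mul_one, add_right_comm]
      _ = ∑ k ∈ range (m + n + 1 + 1), c k * qBinom (A * B) (m + n + 1) k := by
        rw [sum_range_succ' _ (m + n + 1), qBinom_zero_right, mul_one]

end JacobiTripleProduct
end QBinomial

section RepSeries

variable {ι κ : Type*}

/-- The generating function `∑ i, X ^ e i` of the values of `e`: its `n`th coefficient is the
number of representations `e i = n`. It takes the junk value `0` at `n` if there are infinitely
many, which does not happen if `e` tends to infinity along the cofinite filter. -/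
noncomputable def repSeries (R : Type*) [Semiring R] (e : ι → ℕ) : R⟦X⟧ :=
  PowerSeries.mk fun n => (Nat.card {i // e i = n} : R)

section Tendsto

variable {e : ι → ℕ} {f : κ → ℕ}

lemma finite_le_of_tendsto (he : Tendsto e cofinite atTop) (n : ℕ) : {i | e i ≤ n}.Finite := by
  simpa using eventually_cofinite.mp (he.eventually_gt_atTop n)

lemma finite_fiber_of_tendsto (he : Tendsto e cofinite atTop) (n : ℕ) : Finite {i // e i = n} :=
  ((finite_le_of_tendsto he n).subset fun _ hi => hi.le).to_subtype

lemma tendsto_add_cofinite_atTop (he : Tendsto e cofinite atTop) (hf : Tendsto f cofinite atTop) :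
    Tendsto (fun p : ι × κ => e p.1 + f p.2) cofinite atTop := by
  refine tendsto_atTop.mpr fun n => eventually_cofinite.mpr ?_
  refine ((finite_le_of_tendsto he n).prod (finite_le_of_tendsto hf n)).subset fun p hp => ?_
  simp only [Set.mem_ofPred_eq, Set.mem_prod] at hp ⊢
  omega

lemma tendsto_const_mul_cofinite_atTop {c : ℕ} (hc : c ≠ 0) (he : Tendsto e cofinite atTop) :
    Tendsto (fun i => c * e i) cofinite atTop :=
  tendsto_atTop_mono (fun i => Nat.le_mul_of_pos_left (e i) (Nat.pos_of_ne_zero hc)) he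

end Tendsto

section Semiring

variable {R : Type*} [Semiring R]

lemma coeff_repSeries (e : ι → ℕ) (n : ℕ) :
    coeff n (repSeries R e) = Nat.card {i // e i = n} :=
  coeff_mk ..

lemma coeff_repSeries_eq_zero {e : ι → ℕ} {n : ℕ} (h : ∀ i, e i ≠ n) :
    coeff n (repSeries R e) = 0 := by
  have : IsEmpty {i // e i = n} := ⟨fun i => h i i.2⟩
  rw [coeff_repSeries, Nat.card_of_isEmpty, Nat.cast_zero]

lemma map_repSeries {S : Type*} [Semiring S] (φ : R →+* S) (e : ι → ℕ) :
    PowerSeries.map φ (repSeries R e) = repSeries S e := by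
  ext n
  simp only [coeff_map, coeff_repSeries, map_natCast]

lemma repSeries_comp_equiv (e : ι → ℕ) (σ : κ ≃ ι) : repSeries R (e ∘ σ) = repSeries R e := by
  ext n
  rw [coeff_repSeries, coeff_repSeries]
  exact congrArg Nat.cast (Nat.card_congr (σ.subtypeEquiv fun _ => Iff.rfl))

lemma repSeries_of_unique [Unique ι] (e : ι → ℕ) : repSeries R e = X ^ e default := by
  ext n
  rw [coeff_repSeries, coeff_X_pow]
  split_ifs with h
  · have : Unique {i // e i = n} := ⟨⟨⟨default, h.symm⟩⟩, fun i => Subsingleton.elim _ _⟩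
    rw [Nat.card_unique, Nat.cast_one]
  · have : IsEmpty {i // e i = n} := ⟨fun i => h (by rw [← i.2, Subsingleton.elim default i.1])⟩
    rw [Nat.card_of_isEmpty, Nat.cast_zero]

lemma repSeries_sumElim {e : ι → ℕ} {f : κ → ℕ} (he : Tendsto e cofinite atTop)
    (hf : Tendsto f cofinite atTop) :
    repSeries R (Sum.elim e f) = repSeries R e + repSeries R f := by
  ext n
  have := finite_fiber_of_tendsto he n
  have := finite_fiber_of_tendsto hf n
  rw [map_add, coeff_repSeries, coeff_repSeries, coeff_repSeries, ← Nat.cast_add, ← Nat.card_sum]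
  exact congrArg Nat.cast (Nat.card_congr Equiv.subtypeSum)

lemma repSeries_mul_repSeries {e : ι → ℕ} {f : κ → ℕ} (he : Tendsto e cofinite atTop)
    (hf : Tendsto f cofinite atTop) :
    repSeries R e * repSeries R f = repSeries R fun p : ι × κ => e p.1 + f p.2 := by
  ext n
  have (m : ℕ) := finite_fiber_of_tendsto he m
  have (m : ℕ) := finite_fiber_of_tendsto hf m
  let σ : {p : ι × κ // e p.1 + f p.2 = n} ≃
      Σ m : antidiagonal n, {i // e i = m.1.1} × {k // f k = m.1.2} :=
    { toFun p := ⟨⟨(e p.1.1, f p.1.2), mem_antidiagonal.mpr p.2⟩, ⟨p.1.1, rfl⟩, ⟨p.1.2, rfl⟩⟩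
      invFun s := ⟨(s.2.1, s.2.2), by rw [s.2.1.2, s.2.2.2, mem_antidiagonal.mp s.1.2]⟩
      left_inv _ := rfl
      right_inv := by
        rintro ⟨⟨⟨a, b⟩, hm⟩, ⟨i, hi⟩, k, hk⟩
        obtain rfl : e i = a := hi
        obtain rfl : f k = b := hk
        rfl }
  rw [coeff_mul, coeff_repSeries, Nat.card_congr σ, Nat.card_sigma, Nat.cast_sum,
    ← sum_coe_sort (antidiagonal n)]
  simp only [coeff_repSeries, Nat.card_prod, Nat.cast_mul]

lemma X_pow_mul_repSeries (c : ℕ) {e : ι → ℕ} (he : Tendsto e cofinite atTop) :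
    X ^ c * repSeries R e = repSeries R fun i => c + e i := by
  rw [← repSeries_of_unique fun _ : Unit => c, repSeries_mul_repSeries (by simp) he]
  exact (repSeries_comp_equiv _ (Equiv.punitProd ι).symm).symm

end Semiring

lemma X_pow_dvd_sum_X_pow_sub_repSeries {R : Type*} [Ring R] {e : ι → ℕ} {n : ℕ} {s : Finset ι}
    (hs : ∀ i, e i < n → i ∈ s) : X ^ n ∣ ∑ i ∈ s, X ^ e i - repSeries R e := by
  classical
  refine X_pow_dvd_iff.mpr fun m hm => ?_
  have hcard : Nat.card {i // e i = m} = #{i ∈ s | m = e i} :=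
    Nat.subtype_card _ fun i => by
      rw [mem_filter]; exact ⟨fun h => h.2.symm, fun h => ⟨hs i (h ▸ hm), h.symm⟩⟩
  simp only [map_sub, map_sum, coeff_X_pow, coeff_repSeries, hcard, sum_boole, sub_self]

section PrimeCharacteristic

variable {p : ℕ} [hp : Fact p.Prime]

lemma pow_char_eq_expand (f : (ZMod p)⟦X⟧) : f ^ p = expand p hp.out.ne_zero f := by
  have h := MvPowerSeries.map_frobenius_expand p hp.out.ne_zero (f := f)
  rwa [ZMod.frobenius_zmod, MvPowerSeries.map_id, RingHom.id_apply, eq_comm] at h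

lemma coeff_mul_pow_char_pow_char_eq_zero {f g : (ZMod p)⟦X⟧} {n : ℕ}
    (hf : ∀ m, m ≡ n [MOD p * p] → coeff m f = 0) : coeff n (f * (g ^ p) ^ p) = 0 := by
  rw [pow_char_eq_expand, pow_char_eq_expand, ← expand_mul, coeff_mul]
  refine sum_eq_zero fun m hm => ?_
  by_cases hdvd : p * p ∣ m.2
  · rw [hf m.1, zero_mul]
    rw [← mem_antidiagonal.mp hm]
    exact (Nat.add_modEq_left_iff.mpr hdvd).symm
  · rw [coeff_expand_of_not_dvd _ _ _ hdvd, mul_zero]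

lemma repSeries_pow_char (e : ι → ℕ) :
    repSeries (ZMod p) e ^ p = repSeries (ZMod p) fun i => p * e i := by
  ext n
  rw [pow_char_eq_expand, coeff_expand]
  split_ifs with h
  · obtain ⟨m, rfl⟩ := h
    simp only [Nat.mul_div_cancel_left _ hp.out.pos, coeff_repSeries,
      Nat.mul_right_inj hp.out.ne_zero]
  · exact (coeff_repSeries_eq_zero fun i hi => h ⟨e i, hi.symm⟩).symm

lemma repSeries_eq_repSeries_fixedPoints {e : ι → ℕ} (he : Tendsto e cofinite atTop) {σ : ι → ι}
    (hσ : σ^[p] = id) (heσ : ∀ i, e (σ i) = e i) :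
    repSeries (ZMod p) e = repSeries (ZMod p) fun i : Function.fixedPoints σ => e i := by
  classical
  ext n
  have := finite_fiber_of_tendsto he n
  have := Fintype.ofFinite {i // e i = n}
  let τ : Function.End {i // e i = n} := Subtype.map σ fun i hi => (heσ i).trans hi
  have hτ : τ ^ p ^ 1 = 1 := by
    have hval : Function.Semiconj Subtype.val τ σ := fun _ => rfl
    rw [pow_one]
    exact funext fun i => Subtype.ext ((hval.iterate_right p i).trans (congrFun hσ _))
  let fixed : Function.fixedPoints τ ≃ {i : Function.fixedPoints σ // e i = n} :=
    { toFun i := ⟨⟨i.1, congrArg Subtype.val i.2⟩, i.1.2⟩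
      invFun i := ⟨⟨i.1, i.2⟩, Subtype.ext i.1.2⟩
      left_inv _ := rfl
      right_inv _ := rfl }
  rw [coeff_repSeries, coeff_repSeries, ZMod.natCast_eq_natCast_iff, ← Nat.card_congr fixed,
    Nat.card_eq_fintype_card, Nat.card_eq_fintype_card]
  exact Equiv.Perm.card_fixedPoints_modEq hτ

end PrimeCharacteristic
end RepSeries

open scoped PowerSeries.WithPiTopology

section Products

lemma tendsto_mul_add_atTop {d : ℕ} (hd : d ≠ 0) (c : ℕ) :
    Tendsto (fun i => d * i + c) atTop atTop :=
  tendsto_atTop_mono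
    (fun i => (Nat.le_mul_of_pos_left i (Nat.pos_of_ne_zero hd)).trans le_self_add) tendsto_id

variable {R : Type*} [TopologicalSpace R]

lemma tendsto_of_X_pow_dvd_sub [Ring R] {f : ℕ → R⟦X⟧} {g : R⟦X⟧} (h : ∀ n, X ^ n ∣ f n - g) :
    Tendsto f atTop (nhds g) := by
  refine (WithPiTopology.tendsto_iff_coeff_tendsto R _ _ _).mpr fun m =>
    tendsto_const_nhds.congr' ?_
  filter_upwards [eventually_gt_atTop m] with n hmn
  have hm := X_pow_dvd_iff.mp (h n) m hmn
  rwa [map_sub, sub_eq_zero, eq_comm] at hm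

lemma multipliable_one_add_X_pow [CommSemiring R] {e : ℕ → ℕ} (he : Tendsto e atTop atTop) :
    Multipliable fun i => (1 + X ^ e i : R⟦X⟧) := by
  nontriviality R
  refine WithPiTopology.multipliable_one_add_of_tendsto_order_atTop_nhds_top R ?_
  simpa only [order_X_pow, Function.comp_def] using ENat.tendsto_natCast_nhds_top.comp he

lemma multipliable_one_sub_X_pow [CommRing R] {e : ℕ → ℕ} (he : Tendsto e atTop atTop) :
    Multipliable fun i => (1 - X ^ e i : R⟦X⟧) := by
  nontriviality R
  simp only [sub_eq_add_neg]
  refine WithPiTopology.multipliable_one_add_of_tendsto_order_atTop_nhds_top R ?_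
  simpa only [order_neg, order_X_pow, Function.comp_def] using ENat.tendsto_natCast_nhds_top.comp he

end Products

section Theta

lemma natAbs_le_triangle_add_one (j : ℤ) : j.natAbs ≤ triangle j + 1 := by
  have h := two_mul_triangle j
  zify
  rcases abs_cases j with ⟨hj, _⟩ | ⟨hj, _⟩ <;> rw [hj] <;> nlinarith [sq_nonneg (j - 1)]

/-- The exponents of Ramanujan's theta function `f(q ^ a, q ^ b)`, see `ramanujanTheta`. -/
def thetaExponent (a b : ℕ) (j : ℤ) : ℕ := a * triangle j + b * triangle (-j)

/-- Ramanujan's theta function `f(q ^ a, q ^ b) = ∑ j, q ^ (a j (j - 1) / 2 + b j (j + 1) / 2)`,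
the sum being over all integers `j`. -/
noncomputable def ramanujanTheta (R : Type*) [Semiring R] (a b : ℕ) : R⟦X⟧ :=
  repSeries R (thetaExponent a b)

variable {a b : ℕ}

lemma natAbs_le_thetaExponent_add_one (h : a + b ≠ 0) (j : ℤ) :
    j.natAbs ≤ thetaExponent a b j + 1 := by
  have h₁ := natAbs_le_triangle_add_one j
  have h₂ := natAbs_le_triangle_add_one (-j)
  rw [Int.natAbs_neg] at h₂
  rw [thetaExponent]
  rcases (by omega : 1 ≤ a ∨ 1 ≤ b) with ha | hb <;> nlinarith

lemma tendsto_thetaExponent (h : a + b ≠ 0) : Tendsto (thetaExponent a b) cofinite atTop := by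
  refine tendsto_atTop.mpr fun n => eventually_cofinite.mpr ?_
  refine (Set.finite_Icc (-n : ℤ) n).subset fun j hj => ?_
  have := natAbs_le_thetaExponent_add_one h j
  simp only [Set.mem_ofPred_eq, Set.mem_Icc] at hj ⊢
  omega

variable {R : Type*} [CommRing R]

lemma X_pow_dvd_sum_X_pow_sub_ramanujanTheta (h : a + b ≠ 0) (n : ℕ) :
    X ^ n ∣ ∑ k ∈ range (n + n + 1), X ^ thetaExponent a b (k - n) - ramanujanTheta R a b := by
  let shift : ℕ ↪ ℤ := Nat.castEmbedding.trans (Equiv.subRight (n : ℤ)).toEmbedding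
  have hmem (j : ℤ) (hj : thetaExponent a b j < n) : j ∈ (range (n + n + 1)).map shift := by
    have hj : j.natAbs ≤ n := (natAbs_le_thetaExponent_add_one h j).trans hj
    refine mem_map.mpr ⟨(j + n).toNat, mem_range.mpr (by omega), ?_⟩
    change ((j + n).toNat : ℤ) - n = j
    omega
  have hdvd := X_pow_dvd_sum_X_pow_sub_repSeries (R := R) hmem
  rw [sum_map] at hdvd
  exact hdvd

lemma X_pow_dvd_X_pow_thetaExponent_mul_qBinom (h : a + b ≠ 0) {n k : ℕ} (hk : k ≤ n + n) :
    (X : R⟦X⟧) ^ n ∣ X ^ thetaExponent a b (k - n) *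
      (qBinom (X ^ (a + b)) (n + n) k * qPochhammer (X ^ (a + b)) (n + n) - 1) := by
  obtain ⟨l, hl⟩ := Nat.exists_eq_add_of_le hk
  have hdvd := pow_dvd_qBinom_mul_qPochhammer_sub_one (X ^ (a + b) : R⟦X⟧)
    (min_le_left k l) (min_le_right k l) hk
  rw [← hl, ← pow_mul] at hdvd
  refine (pow_dvd_pow X ?_).trans ((pow_add X _ _).dvd.trans (mul_dvd_mul_left _ hdvd))
  have := natAbs_le_thetaExponent_add_one h (k - n)
  have : min k l + 1 ≤ (a + b) * (min k l + 1) := Nat.le_mul_of_pos_left _ (by omega)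
  omega

lemma X_pow_dvd_prod_sub_ramanujanTheta (h : a + b ≠ 0) (n : ℕ) :
    X ^ n ∣ (∏ i ∈ range n, (1 + X ^ ((a + b) * i + a))) *
      (∏ i ∈ range n, (1 + X ^ ((a + b) * i + b))) * qPochhammer (X ^ (a + b)) (n + n) -
        ramanujanTheta R a b := by
  have hfinite := prod_mul_prod_eq_sum_qBinom (X ^ a : R⟦X⟧) (X ^ b) n n
  simp only [← pow_add, ← pow_mul, add_comm _ ((a + b) * _)] at hfinite
  have hdvd := dvd_sum fun k (hk : k ∈ range (n + n + 1)) =>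
    X_pow_dvd_X_pow_thetaExponent_mul_qBinom (R := R) h (Nat.lt_succ_iff.mp (mem_range.mp hk))
  have hsum := dvd_add hdvd (X_pow_dvd_sum_X_pow_sub_ramanujanTheta (R := R) h n)
  simp only [mul_sub, mul_one, sum_sub_distrib, sub_add_sub_cancel] at hsum
  convert hsum using 2
  rw [hfinite, sum_mul]
  refine sum_congr rfl fun k _ => ?_
  rw [thetaExponent, neg_sub, ← mul_assoc]

variable [TopologicalSpace R] [IsTopologicalRing R] [T2Space R]

/-- The **Jacobi triple product identity**. -/
theorem tprod_mul_tprod_mul_tprod_eq_ramanujanTheta (h : a + b ≠ 0) :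
    (∏' i : ℕ, (1 + X ^ ((a + b) * i + a))) * (∏' i : ℕ, (1 + X ^ ((a + b) * i + b))) *
      ∏' i : ℕ, (1 - X ^ ((a + b) * (i + 1))) = ramanujanTheta R a b := by
  have hlinear := tendsto_mul_add_atTop h
  have hplus (c : ℕ) := (multipliable_one_add_X_pow (R := R) (hlinear c)).hasProd.tendsto_prod_nat
  have hminus := (multipliable_one_sub_X_pow (R := R) (hlinear (a + b))).hasProd.tendsto_prod_nat
  have hdouble : Tendsto (fun n : ℕ => n + n) atTop atTop := tendsto_id.atTop_add_atTop tendsto_id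
  refine tendsto_nhds_unique (((hplus a).mul (hplus b)).mul (hminus.comp hdouble)) ?_
  refine tendsto_of_X_pow_dvd_sub fun n => ?_
  simpa only [Function.comp_def, qPochhammer, ← pow_mul, mul_add_one] using
    X_pow_dvd_prod_sub_ramanujanTheta h n

end Theta

section PedSeries

/-- The generating function of `ped`. -/
noncomputable def pedSeries : ℤ⟦X⟧ := PowerSeries.mk fun n => (ped n : ℤ)

/-- The generating function `∑ n, (-1) ^ n * ped n * X ^ n`. With these signs, all theta functions
related to `ped` have nonnegative coefficients. -/
noncomputable def signedPedSeries : ℤ⟦X⟧ := rescale (-1) pedSeries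

lemma dvd_coeff_signedPedSeries_iff {m n : ℕ} : (m : ℤ) ∣ coeff n signedPedSeries ↔ m ∣ ped n := by
  rw [signedPedSeries, coeff_rescale, pedSeries, coeff_mk,
    ((isUnit_one.neg).pow n).dvd_mul_left, Int.natCast_dvd_natCast]

/-- The weight of the part `i` with multiplicity `c` in the generating function of `ped`. -/
def pedWeight (i c : ℕ) : ℤ := if Even i → c ≤ 1 then 1 else 0

lemma pedSeries_eq_genFun : pedSeries = Nat.Partition.genFun pedWeight := by
  ext n
  rw [pedSeries, coeff_mk, Nat.Partition.coeff_genFun, ped, Fintype.card_subtype]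
  simp only [Finsupp.prod, pedWeight, prod_boole]
  simp

lemma tsum_pedWeight_mul_one_sub_X_pow {n : ℕ} (hn : Odd n) :
    (1 + ∑' j, pedWeight n (j + 1) • X ^ (n * (j + 1)) : ℤ⟦X⟧) * (1 - X ^ n) = 1 := by
  have hconst : constantCoeff (X ^ n : ℤ⟦X⟧) = 0 := by simp [hn.pos.ne']
  have hgeom : (1 + ∑' j, pedWeight n (j + 1) • X ^ (n * (j + 1)) : ℤ⟦X⟧) = ∑' j, (X ^ n) ^ j := by
    rw [(WithPiTopology.summable_pow_of_constantCoeff_eq_zero hconst).tsum_eq_zero_add]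
    simp [pedWeight, Nat.not_even_iff_odd.mpr hn, pow_mul]
  rw [hgeom, WithPiTopology.tsum_pow_mul_one_sub_of_constantCoeff_eq_zero hconst]

lemma tsum_pedWeight_of_even {n : ℕ} (hn : Even n) :
    (1 + ∑' j, pedWeight n (j + 1) • X ^ (n * (j + 1)) : ℤ⟦X⟧) = 1 + X ^ n := by
  rw [tsum_eq_single 0 fun j hj => by simp [pedWeight, hn, hj]]
  simp [pedWeight]

lemma pedSeries_mul_tprod :
    pedSeries * ∏' i : ℕ, (1 - X ^ (2 * i + 1)) = ∏' i : ℕ, (1 + X ^ (2 * i + 2)) := by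
  have hgen := Nat.Partition.hasProd_genFun pedWeight
  rw [← pedSeries_eq_genFun] at hgen
  have hodd : HasProd (fun i => if Even i then 1 - X ^ (i + 1) else 1 : ℕ → ℤ⟦X⟧)
      (∏' i : ℕ, (1 - X ^ (2 * i + 1))) := by
    have hinj : Function.Injective fun i : ℕ => 2 * i := fun i j h => by simpa using h
    refine (hinj.hasProd_iff fun i hi => if_neg fun h => hi ?_).mp ?_
    · exact h.exists_two_nsmul.imp fun _ h => by simpa using h.symm
    · simpa [Function.comp_def] using
        (multipliable_one_sub_X_pow (R := ℤ) (tendsto_mul_add_atTop two_ne_zero 1)).hasProd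
  have heven : HasProd (fun i => if Even i then 1 else 1 + X ^ (i + 1) : ℕ → ℤ⟦X⟧)
      (∏' i : ℕ, (1 + X ^ (2 * i + 2))) := by
    have hinj : Function.Injective fun i : ℕ => 2 * i + 1 := fun i j h => by simpa using h
    refine (hinj.hasProd_iff fun i hi => ite_eq_left_iff.mpr fun h => (hi ?_).elim).mp ?_
    · exact (Nat.not_even_iff_odd.mp h).imp fun _ h => h.symm
    · simpa [Function.comp_def] using
        (multipliable_one_add_X_pow (R := ℤ) (tendsto_mul_add_atTop two_ne_zero 2)).hasProd
  refine (hgen.mul hodd).unique (heven.congr_fun fun i => ?_)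
  split_ifs with h
  · exact tsum_pedWeight_mul_one_sub_X_pow h.add_one
  · exact (mul_one _).trans (tsum_pedWeight_of_even (Nat.not_even_iff_odd.mp h).add_one)

lemma continuous_rescale {R : Type*} [CommSemiring R] [TopologicalSpace R] [ContinuousMul R]
    (c : R) : Continuous (rescale c) := by
  refine continuous_iff_continuousAt.mpr fun f =>
    (WithPiTopology.tendsto_iff_coeff_tendsto R _ _ _).mpr fun n => ?_
  simp only [coeff_rescale]
  exact ((WithPiTopology.continuous_coeff R n).const_mul (c ^ n)).continuousAt

lemma signedPedSeries_mul_tprod :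
    signedPedSeries * ∏' i : ℕ, (1 + X ^ (2 * i + 1)) = ∏' i : ℕ, (1 + X ^ (2 * i + 2)) := by
  have hodd := multipliable_one_sub_X_pow (R := ℤ) (tendsto_mul_add_atTop two_ne_zero 1)
  have heven := multipliable_one_add_X_pow (R := ℤ) (tendsto_mul_add_atTop two_ne_zero 2)
  have h := congrArg (rescale (-1)) pedSeries_mul_tprod
  rw [map_mul, hodd.map_tprod _ (continuous_rescale _),
    heven.map_tprod _ (continuous_rescale _)] at h
  simpa [rescale_X, neg_pow, pow_succ, pow_mul, signedPedSeries] using h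

lemma signedPedSeries_mul_ramanujanTheta_one_one :
    signedPedSeries * ramanujanTheta ℤ 1 1 = ramanujanTheta ℤ 1 3 := by
  have hplus {d : ℕ} (hd : d ≠ 0) (c : ℕ) :=
    multipliable_one_add_X_pow (R := ℤ) (tendsto_mul_add_atTop hd c)
  have hodd : (∏' i : ℕ, (1 + X ^ (4 * i + 1)) : ℤ⟦X⟧) * ∏' i : ℕ, (1 + X ^ (4 * i + 3)) =
      ∏' i : ℕ, (1 + X ^ (2 * i + 1)) := by
    convert tprod_even_mul_odd (f := fun i : ℕ => (1 + X ^ (2 * i + 1) : ℤ⟦X⟧)) ?_ ?_ using 5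
    · ring
    · ring
    · exact (hplus four_ne_zero 1).congr fun i => by ring
    · exact (hplus four_ne_zero 3).congr fun i => by ring
  have heven : (∏' i : ℕ, (1 - X ^ (2 * (i + 1))) : ℤ⟦X⟧) * ∏' i : ℕ, (1 + X ^ (2 * i + 2)) =
      ∏' i : ℕ, (1 - X ^ (4 * (i + 1))) := by
    rw [← Multipliable.tprod_mul _ (hplus two_ne_zero 2)]
    · exact tprod_congr fun i => by ring
    · exact multipliable_one_sub_X_pow (tendsto_mul_add_atTop two_ne_zero 2)
  rw [← tprod_mul_tprod_mul_tprod_eq_ramanujanTheta (by simp),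
    ← tprod_mul_tprod_mul_tprod_eq_ramanujanTheta (by simp), one_add_one_eq_two,
    show 1 + 3 = 4 from rfl, hodd, ← heven, ← signedPedSeries_mul_tprod]
  ring

lemma two_mul_signedPedSeries_mul_ramanujanTheta_one_three :
    2 * signedPedSeries * ramanujanTheta ℤ 1 3 = ramanujanTheta ℤ 0 2 := by
  have hzero : (∏' i : ℕ, (1 + X ^ (2 * i)) : ℤ⟦X⟧) = 2 * ∏' i : ℕ, (1 + X ^ (2 * i + 2)) := by
    rw [tprod_eq_zero_mul'
      ((multipliable_one_add_X_pow (tendsto_mul_add_atTop two_ne_zero 2)).congr fun i => by ring)]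
    simp [mul_add_one, one_add_one_eq_two]
  rw [← signedPedSeries_mul_ramanujanTheta_one_one,
    ← tprod_mul_tprod_mul_tprod_eq_ramanujanTheta (a := 0) (by simp),
    ← tprod_mul_tprod_mul_tprod_eq_ramanujanTheta (by simp), one_add_one_eq_two, zero_add]
  simp only [add_zero, hzero, ← signedPedSeries_mul_tprod]
  ring

end PedSeries

section ThetaExponent

lemma thetaExponent_one_one (j : ℤ) : (thetaExponent 1 1 j : ℤ) = j ^ 2 := by
  have := two_mul_triangle j
  have := two_mul_triangle (-j)
  rw [thetaExponent]; push_cast; linarith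

lemma eight_mul_thetaExponent_one_three_add_one (j : ℤ) :
    8 * (thetaExponent 1 3 j : ℤ) + 1 = (4 * j + 1) ^ 2 := by
  have := two_mul_triangle j
  have := two_mul_triangle (-j)
  rw [thetaExponent]; push_cast; linarith

lemma thetaExponent_zero_two (j : ℤ) : (thetaExponent 0 2 j : ℤ) = j ^ 2 + j := by
  have := two_mul_triangle (-j)
  rw [thetaExponent]; push_cast; linarith

end ThetaExponent

lemma natCast_dvd_coeff_iff {m n : ℕ} {f : ℤ⟦X⟧} :
    (m : ℤ) ∣ coeff n f ↔ coeff n (PowerSeries.map (Int.castRingHom (ZMod m)) f) = 0 := by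
  rw [coeff_map, eq_intCast, ZMod.intCast_zmod_eq_zero_iff_dvd]

lemma not_sq_add_mul_sq_modEq {m : ℕ} {c r : ℤ} (h : ∀ x y : ZMod m, x ^ 2 + c * y ^ 2 ≠ r)
    (x y : ℤ) : ¬ x ^ 2 + c * y ^ 2 ≡ r [ZMOD m] := fun hxy =>
  h x y (mod_cast (ZMod.intCast_eq_intCast_iff _ _ _).mpr hxy)

section ModEight

lemma tendsto_succ_sq : Tendsto (fun j : ℕ => (j + 1) ^ 2) cofinite atTop := by
  rw [Nat.cofinite_eq_atTop]
  exact tendsto_atTop_mono (fun j => by simp only [id]; nlinarith) tendsto_id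

lemma ramanujanTheta_one_one_eq (R : Type*) [Semiring R] :
    ramanujanTheta R 1 1 = 1 + 2 * repSeries R fun j : ℕ => (j + 1) ^ 2 := by
  have hsq : Tendsto (fun j : ℕ => j ^ 2) cofinite atTop := by
    rw [Nat.cofinite_eq_atTop]
    exact tendsto_pow_atTop two_ne_zero
  have hnat : repSeries R (fun j : ℕ => j ^ 2) = repSeries R (fun j : ℕ => (j + 1) ^ 2) + 1 := by
    rw [← repSeries_comp_equiv _ Equiv.natSumPUnitEquivNat, ← pow_zero X,
      ← repSeries_of_unique fun _ : Unit => 0, ← repSeries_sumElim tendsto_succ_sq (by simp)]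
    congr 1
    ext (j | j) <;> rfl
  have hint : thetaExponent 1 1 ∘ Equiv.intEquivNatSumNat.symm =
      Sum.elim (fun j : ℕ => j ^ 2) fun j : ℕ => (j + 1) ^ 2 := by
    ext (j | j) <;> zify <;> rw [Function.comp_apply, thetaExponent_one_one]
    · rfl
    · exact (congrArg (· ^ 2) (Int.negSucc_eq j)).trans (neg_sq _)
  rw [ramanujanTheta, ← repSeries_comp_equiv _ Equiv.intEquivNatSumNat.symm, hint,
    repSeries_sumElim hsq tendsto_succ_sq, hnat, add_right_comm, add_comm, two_mul]

theorem eight_dvd_ped {n : ℕ} (h₁ : ∀ x y : ℤ, x ^ 2 + 8 * y ^ 2 ≠ 8 * n + 1)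
    (h₂ : ∀ x y : ℤ, x ^ 2 + 16 * y ^ 2 ≠ 8 * n + 1) : 8 ∣ ped n := by
  set S : ℤ⟦X⟧ := repSeries ℤ fun j : ℕ => (j + 1) ^ 2 with hS
  have htheta : Tendsto (thetaExponent 1 3) cofinite atTop := tendsto_thetaExponent (by simp)
  have hexpand : signedPedSeries = ramanujanTheta ℤ 1 3 - 2 • (ramanujanTheta ℤ 1 3 * S) +
      4 • (ramanujanTheta ℤ 1 3 * S ^ 2) - 8 • (signedPedSeries * S ^ 3) := by
    rw [← signedPedSeries_mul_ramanujanTheta_one_one, ramanujanTheta_one_one_eq]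
    ring
  have hzero : coeff n (ramanujanTheta ℤ 1 3) = 0 :=
    coeff_repSeries_eq_zero fun i hi => h₁ (4 * i + 1) 0 <| by
      rw [← hi, eight_mul_thetaExponent_one_three_add_one]; ring
  have hone : coeff n (ramanujanTheta ℤ 1 3 * S) = 0 := by
    rw [ramanujanTheta, hS, repSeries_mul_repSeries htheta tendsto_succ_sq]
    refine coeff_repSeries_eq_zero fun i hi => h₁ (4 * i.1 + 1) (i.2 + 1) ?_
    rw [← hi, ← eight_mul_thetaExponent_one_three_add_one]
    push_cast; ring
  have htwo : ((2 : ℕ) : ℤ) ∣ coeff n (ramanujanTheta ℤ 1 3 * S ^ 2) := by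
    rw [natCast_dvd_coeff_iff, map_mul, map_pow, ramanujanTheta, hS, map_repSeries, map_repSeries,
      repSeries_pow_char, repSeries_mul_repSeries htheta
        (tendsto_const_mul_cofinite_atTop two_ne_zero tendsto_succ_sq)]
    refine coeff_repSeries_eq_zero fun i hi => h₂ (4 * i.1 + 1) (i.2 + 1) ?_
    rw [← hi, ← eight_mul_thetaExponent_one_three_add_one]
    push_cast; ring
  rw [← dvd_coeff_signedPedSeries_iff, hexpand]
  simp only [map_add, map_sub, map_nsmul, hzero, hone]
  simp only [nsmul_eq_mul]
  omega

end ModEight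

section ModThree

/-- The norm form `u ^ 2 + u * v + v ^ 2` of the Eisenstein integers; it is nonnegative, so that
`Int.toNat` does not truncate it. -/
def eisensteinNorm (w : ℤ × ℤ) : ℕ := (w.1 ^ 2 + w.1 * w.2 + w.2 ^ 2).toNat

lemma natCast_eisensteinNorm (w : ℤ × ℤ) :
    (eisensteinNorm w : ℤ) = w.1 ^ 2 + w.1 * w.2 + w.2 ^ 2 :=
  Int.toNat_of_nonneg (by nlinarith [sq_nonneg (w.1 + w.2), sq_nonneg w.1, sq_nonneg w.2])

lemma tendsto_eisensteinNorm : Tendsto eisensteinNorm cofinite atTop := by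
  refine tendsto_atTop.mpr fun n => eventually_cofinite.mpr ?_
  refine (Set.finite_Icc (-n : ℤ × ℤ) n).subset fun w hw => ?_
  have hnorm := natCast_eisensteinNorm w
  have hw : (eisensteinNorm w : ℤ) < n := by simpa using hw
  have h₁ : 3 * w.1 ^ 2 < 4 * n := by nlinarith [sq_nonneg (w.1 + 2 * w.2)]
  have h₂ : 3 * w.2 ^ 2 < 4 * n := by nlinarith [sq_nonneg (2 * w.1 + w.2)]
  refine ⟨⟨?_, ?_⟩, ?_, ?_⟩ <;> simp <;> nlinarith

/-- Splits off the parity of the second coordinate, so that `eisensteinNorm` becomes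
`x ^ 2 + 3 * y ^ 2` on the first summand and `1 + (x ^ 2 + x) + 3 * (y ^ 2 + y)` on the second. -/
noncomputable def parityEquiv : (ℤ × ℤ) ⊕ (ℤ × ℤ) ≃ ℤ × ℤ :=
  Equiv.ofBijective
      (Sum.elim (fun p => (p.1 - p.2, 2 * p.2)) fun p => (p.1 - p.2, 2 * p.2 + 1)) <| by
    constructor
    · rintro (⟨x, y⟩ | ⟨x, y⟩) (⟨x', y'⟩ | ⟨x', y'⟩) h <;>
        simp only [Sum.elim_inl, Sum.elim_inr, Prod.mk.injEq, Sum.inl.injEq,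
          Sum.inr.injEq] at h ⊢ <;>
        omega
    · rintro ⟨u, v⟩
      obtain ⟨y, rfl | rfl⟩ := v.even_or_odd'
      · exact ⟨Sum.inl (u + y, y), by simp⟩
      · exact ⟨Sum.inr (u + y, y), by simp⟩

lemma parityEquiv_inl (p : ℤ × ℤ) : parityEquiv (Sum.inl p) = (p.1 - p.2, 2 * p.2) := rfl

lemma parityEquiv_inr (p : ℤ × ℤ) : parityEquiv (Sum.inr p) = (p.1 - p.2, 2 * p.2 + 1) := rfl

lemma eisensteinNorm_comp_parityEquiv : eisensteinNorm ∘ parityEquiv =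
    Sum.elim (fun p => thetaExponent 1 1 p.1 + 3 * thetaExponent 1 1 p.2)
      fun p => 1 + (thetaExponent 0 2 p.1 + 3 * thetaExponent 0 2 p.2) := by
  ext (p | p) <;> zify <;> rw [Function.comp_apply, natCast_eisensteinNorm]
  · rw [parityEquiv_inl, Sum.elim_inl]
    push_cast [thetaExponent_one_one]
    ring
  · rw [parityEquiv_inr, Sum.elim_inr]
    push_cast [thetaExponent_zero_two]
    ring

lemma repSeries_eisensteinNorm : repSeries (ZMod 3) eisensteinNorm = 1 := by
  -- Rotation by a third of a turn preserves the norm form and fixes only the origin.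
  let σ : ℤ × ℤ → ℤ × ℤ := fun w => (w.2, -w.1 - w.2)
  have hσ : σ^[3] = id := funext fun w => by ext <;> simp [σ] <;> ring
  have hfixed (w : Function.fixedPoints σ) : w.1 = 0 := by
    have := congrArg Prod.fst w.2.eq
    have := congrArg Prod.snd w.2.eq
    ext <;> simp only [σ] at * <;> simp <;> omega
  let _ : Unique (Function.fixedPoints σ) :=
    ⟨⟨0, rfl⟩, fun w => Subtype.ext (hfixed w)⟩
  rw [repSeries_eq_repSeries_fixedPoints tendsto_eisensteinNorm hσ fun w => ?_,
    repSeries_of_unique, hfixed]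
  · rfl
  · zify [natCast_eisensteinNorm, σ]
    ring

lemma ramanujanTheta_pow_four_add :
    ramanujanTheta (ZMod 3) 1 1 ^ 4 + X * ramanujanTheta (ZMod 3) 0 2 ^ 4 = 1 := by
  have h₁ : Tendsto (thetaExponent 1 1) cofinite atTop := tendsto_thetaExponent (by simp)
  have h₂ : Tendsto (thetaExponent 0 2) cofinite atTop := tendsto_thetaExponent (by simp)
  have h₁₃ := tendsto_const_mul_cofinite_atTop three_ne_zero h₁
  have h₂₃ := tendsto_const_mul_cofinite_atTop three_ne_zero h₂
  have hsum₁ := tendsto_add_cofinite_atTop h₁ h₁₃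
  have hsum₂ := tendsto_add_cofinite_atTop h₂ h₂₃
  rw [← repSeries_eisensteinNorm, ← repSeries_comp_equiv _ parityEquiv,
    eisensteinNorm_comp_parityEquiv,
    repSeries_sumElim hsum₁ (tendsto_atTop_mono (fun _ => Nat.le_add_left _ 1) hsum₂),
    ← X_pow_mul_repSeries 1 hsum₂, ← repSeries_mul_repSeries h₁ h₁₃,
    ← repSeries_mul_repSeries h₂ h₂₃, ← repSeries_pow_char, ← repSeries_pow_char,
    ramanujanTheta, ramanujanTheta]
  ring

lemma eq_add_of_mul_eq_of_two_mul_mul_eq {R : Type*} [CommRing R] (hR : (3 : R) = 0)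
    {g x φ ψ t : R} (hψ : g * φ = ψ) (ht : 2 * g * ψ = t) (hφt : φ ^ 4 + x * t ^ 4 = 1) :
    g = ψ * φ ^ 3 + x * (φ * φ ^ 3) * (g ^ 3) ^ 3 := by
  subst hψ ht
  -- Since `t = 2 * g ^ 2 * φ`, this is `g` times `hφt`, up to `16 = 1`.
  linear_combination (-g) * hφt + 5 * x * φ ^ 4 * g ^ 9 * hR

lemma map_signedPedSeries_eq_add :
    PowerSeries.map (Int.castRingHom (ZMod 3)) signedPedSeries =
      ramanujanTheta (ZMod 3) 1 3 * ramanujanTheta (ZMod 3) 1 1 ^ 3 +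
        X * (ramanujanTheta (ZMod 3) 1 1 * ramanujanTheta (ZMod 3) 1 1 ^ 3) *
          (PowerSeries.map (Int.castRingHom (ZMod 3)) signedPedSeries ^ 3) ^ 3 := by
  have hψ := congrArg (PowerSeries.map (Int.castRingHom (ZMod 3)))
    signedPedSeries_mul_ramanujanTheta_one_one
  have ht := congrArg (PowerSeries.map (Int.castRingHom (ZMod 3)))
    two_mul_signedPedSeries_mul_ramanujanTheta_one_three
  simp only [map_mul, map_ofNat, ramanujanTheta, map_repSeries] at hψ ht
  refine eq_add_of_mul_eq_of_two_mul_mul_eq ?_ hψ ht ramanujanTheta_pow_four_add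
  exact (map_ofNat C 3).symm.trans ((congrArg C (by decide : (3 : ZMod 3) = 0)).trans (map_zero C))

theorem three_dvd_ped (n : ℕ) : 3 ∣ ped (9 * n + 7) := by
  have h₁ : Tendsto (thetaExponent 1 1) cofinite atTop := tendsto_thetaExponent (by simp)
  have h₁₃ := tendsto_const_mul_cofinite_atTop three_ne_zero h₁
  have h₃ : Tendsto (thetaExponent 1 3) cofinite atTop := tendsto_thetaExponent (by simp)
  rw [← dvd_coeff_signedPedSeries_iff, natCast_dvd_coeff_iff, map_signedPedSeries_eq_add, map_add,
    coeff_mul_pow_char_pow_char_eq_zero fun m hm => ?_, add_zero]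
  · rw [ramanujanTheta, ramanujanTheta, repSeries_pow_char, repSeries_mul_repSeries h₃ h₁₃]
    have hmod := not_sq_add_mul_sq_modEq (m := 9) (c := 24) (r := 3) (by decide)
    refine coeff_repSeries_eq_zero fun i hi => hmod (4 * i.1 + 1) i.2 ?_
    rw [← eight_mul_thetaExponent_one_three_add_one, ← thetaExponent_one_one, Int.ModEq]
    omega
  · rw [ramanujanTheta, repSeries_pow_char, repSeries_mul_repSeries h₁ h₁₃, ← pow_one X,
      X_pow_mul_repSeries 1 (tendsto_add_cofinite_atTop h₁ h₁₃)]
    have hmod := not_sq_add_mul_sq_modEq (m := 9) (c := 3) (r := 6) (by decide)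
    refine coeff_repSeries_eq_zero fun i hi => hmod i.1 i.2 ?_
    rw [← thetaExponent_one_one, ← thetaExponent_one_one, Int.ModEq]
    rw [Nat.ModEq] at hm
    omega

end ModThree

theorem ped_225n_add_223 (n : ℕ) : ped (225 * n + 223) ≡ 0 [MOD 24] := by
  have h₃ : 3 ∣ ped (9 * (25 * n + 24) + 7) := three_dvd_ped (25 * n + 24)
  have h₈ : 8 ∣ ped (225 * n + 223) := by
    have h₂₅ := not_sq_add_mul_sq_modEq (m := 25) (c := 8) (r := 10) (by decide)
    have h₉ := not_sq_add_mul_sq_modEq (m := 9) (c := 16) (r := 3) (by decide)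
    refine eight_dvd_ped (fun x y h => h₂₅ x y ?_) fun x y h => h₉ x y ?_
    all_goals rw [h, Int.ModEq]; omega
  rw [show 9 * (25 * n + 24) + 7 = 225 * n + 223 by ring] at h₃
  exact Nat.modEq_zero_iff_dvd.mpr (by omega)
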